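/- Let B = {B_n : n ∈ ℕ} be a partition of ℕ×ℕ into infinitely many infinite sets. The following are equivalent: (1) Sel is a P(Fin(B))-ideal; (2) ED is a P(Fin(B))-ideal; (3) ED ⊥ Fin(B); (4) ED ⊆↾ Fin(B); (5) Sel ⊆↾ Fin(B); (6) both Sel and Fin×∅ are P(Fin(B))-ideals; (7) ℕ×ℕ can be covered by finitely many verticals V_n, finitely many sets B_n, and finitely many graphs of functions from ℕ to ℕ; (8) there is no sequence ⟨T_k : k ∈ ℕ⟩ of essentially different towers such that each T_k is a (1,k)-tower of B-monochromatic functions. -/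

import Mathlib

open Set

/-- An ideal on an (infinite) set: contains all finite sets, is proper,
closed under subsets and finite unions. -/
def IsIdeal {α : Type*} (I : Set (Set α)) : Prop :=
  (∀ s : Set α, s.Finite → s ∈ I) ∧ (Set.univ : Set α) ∉ I ∧
  (∀ s t : Set α, s ∈ I → t ⊆ s → t ∈ I) ∧
  (∀ s t : Set α, s ∈ I → t ∈ I → s ∪ t ∈ I)

/-- `I` is a `P(J)`-ideal. -/
def IsPJIdeal {α : Type*} (I J : Set (Set α)) : Prop :=
  ∀ f : ℕ → Set α, (∀ n, f n ∈ I) → ∃ A ∈ I, ∀ n, f n \ A ∈ J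

/-- Orthogonality of two ideals. -/
def Orth {α : Type*} (I J : Set (Set α)) : Prop :=
  ∃ A : Set α, A ∈ I ∧ Aᶜ ∈ J

/-- `I ⊆↾ J` : the whole ideal `I` has a `J`-union in `I`. -/
def SubRestr {α : Type*} (I J : Set (Set α)) : Prop :=
  ∃ E ∈ I, ∀ A ∈ I, A \ E ∈ J

/-- A tall ideal. -/
def IsTall {α : Type*} (I : Set (Set α)) : Prop :=
  ∀ X : Set α, X.Infinite → ∃ A ∈ I, (X ∩ A).Infinite

/-- A nowhere tall ideal. -/
def NowhereTall {α : Type*} (J : Set (Set α)) : Prop :=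
  ∀ A : Set α, A ∉ J → ∃ B ⊆ A, B.Infinite ∧
    (fun j => j ∩ B) '' J = {s : Set α | s ⊆ B ∧ s.Finite}

/-- An almost disjoint family: infinite members, pairwise finite intersections. -/
def IsADFamily {α : Type*} (C : Set (Set α)) : Prop :=
  (∀ A ∈ C, A.Infinite) ∧ ∀ A ∈ C, ∀ B ∈ C, A ≠ B → (A ∩ B).Finite

/-- The ideal generated by a family `C` (together with the finite sets). -/
def genIdeal {α : Type*} (C : Set (Set α)) : Set (Set α) :=
  {A | ∃ F : Finset (Set α), ↑F ⊆ C ∧ (A \ ⋃₀ ↑F).Finite}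

/-- The `n`-th vertical `{n} × ℕ` in `ℕ × ℕ`. -/
def Vert (n : ℕ) : Set (ℕ × ℕ) := {p | p.1 = n}

/-- A partition of `ℕ × ℕ` into infinitely many infinite sets (indexed by `ℕ`). -/
def IsPartition (A : ℕ → Set (ℕ × ℕ)) : Prop :=
  (∀ n, (A n).Infinite) ∧ (∀ i j, i ≠ j → A i ∩ A j = ∅) ∧ (⋃ n, A n) = Set.univ

/-- `Fin(A)`: the ideal generated by the partition `A`. -/
def FinPart (A : ℕ → Set (ℕ × ℕ)) : Set (Set (ℕ × ℕ)) :=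
  {X | ∃ F : Finset ℕ, (X \ ⋃ n ∈ F, A n).Finite}

/-- `OFin(A)`: sets with finite intersection with each member of `A`. -/
def OFinPart (A : ℕ → Set (ℕ × ℕ)) : Set (Set (ℕ × ℕ)) :=
  {X | ∀ n, (X ∩ A n).Finite}

/-- `FinFin(A)`: the ideal generated by `Fin(A) ∪ OFin(A)`. -/
def FinFinPart (A : ℕ → Set (ℕ × ℕ)) : Set (Set (ℕ × ℕ)) :=
  {X | ∃ Y ∈ FinPart A, ∃ Z ∈ OFinPart A, X ⊆ Y ∪ Z}

/-- `Sel(A)`: sets meeting each member of `A` in at most `m` points, for some `m`. -/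
def SelPart (A : ℕ → Set (ℕ × ℕ)) : Set (Set (ℕ × ℕ)) :=
  {X | ∃ m : ℕ, ∀ n, (X ∩ A n).encard ≤ (m : ℕ∞)}

/-- `ED(A)`: sets meeting all but finitely many members of `A` in at most `m` points. -/
def EDPart (A : ℕ → Set (ℕ × ℕ)) : Set (Set (ℕ × ℕ)) :=
  {X | ∃ m : ℕ, {n | (m : ℕ∞) < (X ∩ A n).encard}.Finite}

/-- The ideal `Sel` on `ℕ × ℕ` (w.r.t. the vertical partition). -/
def SelI : Set (Set (ℕ × ℕ)) := SelPart Vert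

/-- The ideal `ED` on `ℕ × ℕ` (w.r.t. the vertical partition). -/
def EDI : Set (Set (ℕ × ℕ)) := EDPart Vert

/-- The ideal `Fin × ∅` on `ℕ × ℕ`, generated by the verticals. -/
def FinVert : Set (Set (ℕ × ℕ)) := FinPart Vert

/-- A subset of `ℕ × ℕ` is the graph of a partial function from `ℕ` to `ℕ`. -/
def IsPFunGraph (g : Set (ℕ × ℕ)) : Prop :=
  ∀ p ∈ g, ∀ q ∈ g, p.1 = q.1 → p = q

/-- The domain of (the graph of) a partial function. -/
def pdom (g : Set (ℕ × ℕ)) : Set ℕ := Prod.fst '' g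

/-- The graph of a total function `ℕ → ℕ`. -/
def totGraph (f : ℕ → ℕ) : Set (ℕ × ℕ) := {p | f p.1 = p.2}

/-- A `(κ, lam)`-tower of functions: `lam` many pairwise disjoint nonempty
partial functions from `ℕ` to `ℕ`, all with the same domain of cardinality `κ`. -/
def IsTower (κ lam : ℕ∞) (T : Set (Set (ℕ × ℕ))) : Prop :=
  T.encard = lam ∧
  (∀ g ∈ T, IsPFunGraph g ∧ g.Nonempty) ∧
  (∃ a : Set ℕ, a.encard = κ ∧ ∀ g ∈ T, pdom g = a) ∧
  (∀ g ∈ T, ∀ g' ∈ T, g ≠ g' → g ∩ g' = ∅)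

/-- A `(κ, lam)`-tower of `B`-monochromatic functions. -/
def IsMonoTower (B : ℕ → Set (ℕ × ℕ)) (κ lam : ℕ∞) (T : Set (Set (ℕ × ℕ))) : Prop :=
  IsTower κ lam T ∧ ∀ g ∈ T, ∃ n, g ⊆ B n

/-- The (indices of the) colors used by a tower: `C_T`. -/
def towerColors (B : ℕ → Set (ℕ × ℕ)) (T : Set (Set (ℕ × ℕ))) : Set ℕ :=
  {n | ∃ g ∈ T, g ⊆ B n}

/-- The domain of a tower: `dom(T)`. -/
def towerDom (T : Set (Set (ℕ × ℕ))) : Set ℕ := ⋃ g ∈ T, pdom g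

/-- A sequence of essentially different towers: pairwise disjoint color sets
and pairwise disjoint domains. -/
def EssDiff (B : ℕ → Set (ℕ × ℕ)) (T : ℕ → Set (Set (ℕ × ℕ))) : Prop :=
  ∀ i j, i ≠ j → towerColors B (T i) ∩ towerColors B (T j) = ∅ ∧
    towerDom (T i) ∩ towerDom (T j) = ∅

/-!
The pivot is (3). Since `ED` is generated by `Sel` and `Fin × ∅`, orthogonality of `ED` and `J` says
that some `S ∈ Sel` and `V ∈ Fin × ∅` have `(S ∪ V)ᶜ ∈ J`; as members of `Sel` and `Fin × ∅` meet in
finite sets, `S` then absorbs all of `Sel` modulo `J` and `V` absorbs all of `Fin × ∅`.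

If `ED` and `Fin(B)` are not orthogonal, then for every finite union `U` of sets `B n` the verticals
have unboundedly many points outside `U`, even after finitely many verticals are removed. Choosing
recursively gives sets `S k` of `k` points, each inside one vertical, such that every vertical and
every `B n` meets at most one `S k`. Splitting the `S k` into points, these are exactly the towers
of (8). Given such `S k`, let `X m` consist of `min m k` points from each `S k`, so that
`X m ∈ Sel`. A set `A` with `X m \ A ∈ Fin(B)` contains all but finitely many points of `X m`, so it
has at least `m` points in infinitely many verticals; no `A ∈ ED` does this for all `m`.
-/

section Ideals

variable {α : Type*} {I J K : Set (Set α)}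

lemma SubRestr.isPJIdeal (h : SubRestr I J) : IsPJIdeal I J := by
  obtain ⟨E, hE, hsub⟩ := h
  exact fun f hf => ⟨E, hE, fun n => hsub _ (hf n)⟩

lemma Orth.subRestr (hJ : IsLowerSet J) (h : Orth I J) : SubRestr I J := by
  obtain ⟨A, hA, hAc⟩ := h
  exact ⟨A, hA, fun _ _ => hJ (fun _ hx => hx.2) hAc⟩

lemma subRestr_of_compl_union_mem (hlower : IsLowerSet J) (hsup : SupClosed J)
    (hinter : ∀ X ∈ I, ∀ Y ∈ K, X ∩ Y ∈ J) {S V : Set α} (hS : S ∈ I) (hV : V ∈ K)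
    (hSV : (S ∪ V)ᶜ ∈ J) : SubRestr I J := by
  refine ⟨S, hS, fun X hX => hlower ?_ (hsup (hinter X hX V hV) hSV)⟩
  rintro x ⟨hxX, hxS⟩
  by_cases hxV : x ∈ V
  · exact Or.inl ⟨hxX, hxV⟩
  · exact Or.inr (not_or.2 ⟨hxS, hxV⟩)

end Ideals

section FinPart

variable {A : ℕ → Set (ℕ × ℕ)} {X : Set (ℕ × ℕ)}

lemma isLowerSet_finPart : IsLowerSet (FinPart A) :=
  fun _ _ hYX ⟨F, hF⟩ => ⟨F, hF.subset (sdiff_subset_sdiff_left hYX)⟩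

lemma supClosed_finPart : SupClosed (FinPart A) := by
  classical
  rintro X ⟨F, hF⟩ Y ⟨G, hG⟩
  refine ⟨F ∪ G, (hF.union hG).subset ?_⟩
  rintro x ⟨hx, hxFG⟩
  rw [Finset.set_biUnion_union] at hxFG
  exact hx.imp (fun h => ⟨h, fun hF => hxFG (Or.inl hF)⟩) fun h => ⟨h, fun hG => hxFG (Or.inr hG)⟩

lemma mem_finPart_of_finite (hX : X.Finite) : X ∈ FinPart A :=
  ⟨∅, hX.subset sdiff_subset⟩

lemma mem_finPart_of_subset {F : Finset ℕ} (hX : X ⊆ ⋃ n ∈ F, A n) : X ∈ FinPart A :=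
  ⟨F, by simp only [sdiff_eq_empty.2 hX, finite_empty]⟩

end FinPart

section Generators

variable {X Y : Set (ℕ × ℕ)}

lemma mem_finVert_iff : X ∈ FinVert ↔ ∃ F : Finset ℕ, X ⊆ ⋃ n ∈ F, Vert n := by
  classical
  refine ⟨?_, fun ⟨F, hF⟩ => mem_finPart_of_subset hF⟩
  rintro ⟨F, hF⟩
  refine ⟨F ∪ hF.toFinset.image Prod.fst, fun x hx => ?_⟩
  rw [Finset.set_biUnion_union]
  by_cases hxF : x ∈ ⋃ n ∈ F, Vert n
  · exact Or.inl hxF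
  · exact Or.inr (mem_biUnion (x := x.1)
      (Finset.mem_image_of_mem _ (hF.mem_toFinset.2 ⟨hx, hxF⟩)) rfl)

lemma encard_biUnion_totGraph_inter_vert_le (F : Finset (ℕ → ℕ)) (n : ℕ) :
    ((⋃ f ∈ F, totGraph f) ∩ Vert n).encard ≤ F.card := by
  classical
  have hsub : (⋃ f ∈ F, totGraph f) ∩ Vert n ⊆ (F.image fun f => (n, f n) : Finset (ℕ × ℕ)) := by
    rintro x ⟨hx, rfl⟩
    obtain ⟨f, hf, hxf⟩ := mem_iUnion₂.1 hx
    exact Finset.mem_coe.2 (Finset.mem_image.2 ⟨f, hf, Prod.ext rfl hxf⟩)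
  refine (encard_le_encard hsub).trans ?_
  rw [encard_coe_eq_coe_finsetCard]
  exact_mod_cast Finset.card_image_le

lemma exists_subset_biUnion_totGraph {m : ℕ} (hX : ∀ n, (X ∩ Vert n).encard ≤ m) :
    ∃ F : Finset (ℕ → ℕ), X ⊆ ⋃ f ∈ F, totGraph f := by
  classical
  have hfin : ∀ n, (X ∩ Vert n).Finite := fun n => finite_of_encard_le_coe (hX n)
  let column : ℕ → List (ℕ × ℕ) := fun n => (hfin n).toFinset.toList
  refine ⟨(Finset.range m).image fun i n => ((column n).getD i 0).2, fun x hx => ?_⟩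
  obtain ⟨i, hi, hxi⟩ : ∃ i, ∃ hi : i < (column x.1).length, (column x.1)[i] = x :=
    List.mem_iff_getElem.1 (Finset.mem_toList.2 ((hfin _).mem_toFinset.2 ⟨hx, rfl⟩))
  have him : i < m := by
    refine hi.trans_le ?_
    rw [Finset.length_toList]
    exact_mod_cast (hfin x.1).encard_eq_coe_toFinset_card ▸ hX x.1
  refine mem_biUnion (Finset.mem_image_of_mem _ (Finset.mem_range.2 him)) ?_
  change ((column x.1).getD i 0).2 = x.2
  rw [List.getD_eq_getElem _ _ hi, hxi]

lemma mem_selI_iff : X ∈ SelI ↔ ∃ F : Finset (ℕ → ℕ), X ⊆ ⋃ f ∈ F, totGraph f := by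
  refine ⟨fun ⟨_, hm⟩ => exists_subset_biUnion_totGraph hm, fun ⟨F, hF⟩ => ⟨F.card, fun n => ?_⟩⟩
  exact (encard_le_encard (inter_subset_inter_left _ hF)).trans
    (encard_biUnion_totGraph_inter_vert_le F n)

lemma selI_subset_edI : SelI ⊆ EDI := by
  rintro X ⟨m, hm⟩
  exact ⟨m, finite_empty.subset fun n hn => (hm n).not_gt hn⟩

lemma mem_edI_iff : X ∈ EDI ↔ ∃ S ∈ SelI, ∃ V ∈ FinVert, X ⊆ S ∪ V := by
  constructor
  · rintro ⟨m, hm⟩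
    let V : Set (ℕ × ℕ) := ⋃ n ∈ hm.toFinset, Vert n
    refine ⟨X \ V, ⟨m, fun n => ?_⟩, V, mem_finPart_of_subset subset_rfl, ?_⟩
    · by_contra! hn
      obtain ⟨x, ⟨-, hxV⟩, rfl⟩ := encard_pos.1 (zero_le.trans_lt hn)
      refine hxV (mem_biUnion (hm.mem_toFinset.2 (hn.trans_le ?_)) rfl)
      exact encard_le_encard (inter_subset_inter_left _ sdiff_subset)
    · rw [sdiff_union_self]
      exact subset_union_left
  · rintro ⟨S, ⟨m, hm⟩, V, hV, hX⟩
    obtain ⟨F, hF⟩ := mem_finVert_iff.1 hV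
    refine ⟨m, F.finite_toSet.subset fun n hn => ?_⟩
    by_contra hnF
    refine (hm n).not_gt (lt_of_lt_of_le hn (encard_le_encard ?_))
    rintro x ⟨hxX, rfl⟩
    refine ⟨(hX hxX).resolve_right fun hxV => hnF ?_, rfl⟩
    obtain ⟨k, hk, rfl⟩ := mem_iUnion₂.1 (hF hxV)
    exact hk

lemma finite_inter_of_mem_selI_of_mem_finVert (hX : X ∈ SelI) (hY : Y ∈ FinVert) :
    (X ∩ Y).Finite := by
  obtain ⟨m, hm⟩ := hX
  obtain ⟨F, hF⟩ := mem_finVert_iff.1 hY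
  have hcolumns : (⋃ n ∈ F, X ∩ Vert n).Finite :=
    F.finite_toSet.biUnion fun n _ => finite_of_encard_le_coe (hm n)
  refine hcolumns.subset ?_
  rw [← inter_iUnion₂]
  exact inter_subset_inter_right X hF

end Generators

section Orthogonality

variable {B : ℕ → Set (ℕ × ℕ)} {J : Set (Set (ℕ × ℕ))}

lemma orth_edI_iff (hJ : IsLowerSet J) :
    Orth EDI J ↔ ∃ S ∈ SelI, ∃ V ∈ FinVert, (S ∪ V)ᶜ ∈ J := by
  constructor
  · rintro ⟨A, hA, hAc⟩
    obtain ⟨S, hS, V, hV, hSV⟩ := mem_edI_iff.1 hA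
    exact ⟨S, hS, V, hV, hJ (compl_subset_compl.2 hSV) hAc⟩
  · rintro ⟨S, hS, V, hV, hSV⟩
    exact ⟨S ∪ V, mem_edI_iff.2 ⟨S, hS, V, hV, subset_rfl⟩, hSV⟩

lemma subRestr_selI_finPart_of_orth (h : Orth EDI (FinPart B)) : SubRestr SelI (FinPart B) := by
  obtain ⟨S, hS, V, hV, hSV⟩ := (orth_edI_iff isLowerSet_finPart).1 h
  refine subRestr_of_compl_union_mem isLowerSet_finPart supClosed_finPart
    (fun X hX Y hY => ?_) hS hV hSV
  exact mem_finPart_of_finite (finite_inter_of_mem_selI_of_mem_finVert hX hY)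

lemma subRestr_finVert_finPart_of_orth (h : Orth EDI (FinPart B)) :
    SubRestr FinVert (FinPart B) := by
  obtain ⟨S, hS, V, hV, hSV⟩ := (orth_edI_iff isLowerSet_finPart).1 h
  refine subRestr_of_compl_union_mem isLowerSet_finPart supClosed_finPart
    (fun X hX Y hY => ?_) hV hS (union_comm S V ▸ hSV)
  exact mem_finPart_of_finite (inter_comm Y X ▸ finite_inter_of_mem_selI_of_mem_finVert hY hX)

lemma orth_edI_finPart_iff_exists_cover :
    Orth EDI (FinPart B) ↔ ∃ (Fv Fb : Finset ℕ) (Ff : Finset (ℕ → ℕ)),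
      univ ⊆ (⋃ n ∈ Fv, Vert n) ∪ (⋃ n ∈ Fb, B n) ∪ ⋃ f ∈ Ff, totGraph f := by
  rw [orth_edI_iff isLowerSet_finPart]
  constructor
  · rintro ⟨S, hS, V, hV, Fb, hrest⟩
    obtain ⟨Fv, hFv⟩ := mem_finVert_iff.1 (supClosed_finPart hV (mem_finPart_of_finite hrest))
    obtain ⟨Ff, hFf⟩ := mem_selI_iff.1 hS
    refine ⟨Fv, Fb, Ff, fun x _ => ?_⟩
    by_cases hxS : x ∈ S
    · exact Or.inr (hFf hxS)
    by_cases hxB : x ∈ ⋃ n ∈ Fb, B n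
    · exact Or.inl (Or.inr hxB)
    by_cases hxV : x ∈ V
    · exact Or.inl (Or.inl (hFv (Or.inl hxV)))
    · exact Or.inl (Or.inl (hFv (Or.inr ⟨not_or.2 ⟨hxS, hxV⟩, hxB⟩)))
  · rintro ⟨Fv, Fb, Ff, hcover⟩
    refine ⟨_, mem_selI_iff.2 ⟨Ff, subset_rfl⟩, _, mem_finVert_iff.2 ⟨Fv, subset_rfl⟩,
      mem_finPart_of_subset (F := Fb) fun x hx => ?_⟩
    rcases hcover (mem_univ x) with (hv | hb) | hf
    · exact absurd (Or.inr hv) hx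
    · exact hb
    · exact absurd (Or.inl hf) hx

end Orthogonality

/-- No vertical and no member of `B` meets both `s` and `t`. -/
def Separated (B : ℕ → Set (ℕ × ℕ)) (s t : Set (ℕ × ℕ)) : Prop :=
  ∀ x ∈ s, ∀ y ∈ t, x.1 ≠ y.1 ∧ ∀ n, x ∈ B n → y ∉ B n

/-- A sequence of `k`-point subsets of verticals, no two of which meet a common vertical or a common
member of `B`. It is a sequence of essentially different `(1, k)`-towers of `B`-monochromatic
functions, with a tower of one-point functions replaced by the set of its points. -/
structure IsSpread (B S : ℕ → Set (ℕ × ℕ)) : Prop where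
  encard_eq : ∀ k, (S k).encard = k
  exists_subset_vert : ∀ k, ∃ n, S k ⊆ Vert n
  separated : Pairwise (Function.onFun (Separated B) S)

section Separated

variable {B : ℕ → Set (ℕ × ℕ)} {s s' t t' : Set (ℕ × ℕ)}

lemma Separated.symm (h : Separated B s t) : Separated B t s :=
  fun y hy x hx => ⟨(h x hx y hy).1.symm, fun n hyn hxn => (h x hx y hy).2 n hxn hyn⟩

lemma Separated.mono (hs : s' ⊆ s) (ht : t' ⊆ t) (h : Separated B s t) : Separated B s' t' :=
  fun x hx y hy => h x (hs hx) y (ht hy)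

end Separated

section Towers

variable {B : ℕ → Set (ℕ × ℕ)} {S : ℕ → Set (ℕ × ℕ)} {s t : Set (ℕ × ℕ)}
  {T : Set (Set (ℕ × ℕ))} {l : ℕ∞}

lemma IsPFunGraph.eq_singleton {g : Set (ℕ × ℕ)} {n : ℕ} (hg : IsPFunGraph g)
    (hdom : pdom g = {n}) {x : ℕ × ℕ} (hx : x ∈ g) : g = {x} := by
  have hfst : ∀ y ∈ g, y.1 = n := fun y hy => hdom.subset (mem_image_of_mem _ hy)
  exact eq_singleton_iff_unique_mem.2
    ⟨hx, fun y hy => hg y hy x hx ((hfst y hy).trans (hfst x hx).symm)⟩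

lemma IsTower.exists_eq_image_singleton (hT : IsTower 1 l T) :
    ∃ (n : ℕ) (s : Set (ℕ × ℕ)), s ⊆ Vert n ∧ s.encard = l ∧ T = singleton '' s := by
  obtain ⟨hcard, hfun, ⟨a, ha, hdom⟩, -⟩ := hT
  obtain ⟨n, rfl⟩ := encard_eq_one.1 ha
  have hsingle : ∀ g ∈ T, ∀ x ∈ g, g = {x} :=
    fun g hg x hx => (hfun g hg).1.eq_singleton (hdom g hg) hx
  have hTeq : T = singleton '' ⋃₀ T := by
    ext g
    constructor
    · intro hg
      obtain ⟨x, hx⟩ := (hfun g hg).2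
      exact ⟨x, ⟨g, hg, hx⟩, (hsingle g hg x hx).symm⟩
    · rintro ⟨x, ⟨g, hg, hx⟩, rfl⟩
      exact hsingle g hg x hx ▸ hg
  refine ⟨n, ⋃₀ T, ?_, ?_, hTeq⟩
  · rintro x ⟨g, hg, hx⟩
    exact (hdom g hg).subset (mem_image_of_mem _ hx)
  · rw [← hcard, hTeq, singleton_injective.encard_image, ← hTeq]

lemma isTower_image_singleton {n : ℕ} (hs : s ⊆ Vert n) :
    IsTower 1 s.encard (singleton '' s) := by
  refine ⟨singleton_injective.encard_image s, ?_, ⟨{n}, encard_singleton n, ?_⟩, ?_⟩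
  · rintro _ ⟨x, -, rfl⟩
    exact ⟨fun y hy z hz _ => hy.trans hz.symm, singleton_nonempty x⟩
  · rintro _ ⟨x, hx, rfl⟩
    rw [pdom, image_singleton, show x.1 = n from hs hx]
  · rintro _ ⟨x, -, rfl⟩ _ ⟨y, -, rfl⟩ hne
    exact singleton_inter_eq_empty.2 fun hxy => hne (congrArg _ hxy)

lemma towerColors_image_singleton : towerColors B (singleton '' s) = {n | (s ∩ B n).Nonempty} := by
  simp only [towerColors, exists_mem_image, singleton_subset_iff, Set.Nonempty, mem_inter_iff]

lemma towerDom_image_singleton : towerDom (singleton '' s) = Prod.fst '' s := by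
  simp only [towerDom, pdom, biUnion_image, image_singleton, ← image_eq_iUnion]

lemma separated_iff_tower_inter_eq_empty :
    Separated B s t ↔
      towerColors B (singleton '' s) ∩ towerColors B (singleton '' t) = ∅ ∧
      towerDom (singleton '' s) ∩ towerDom (singleton '' t) = ∅ := by
  simp only [towerColors_image_singleton, towerDom_image_singleton, eq_empty_iff_forall_notMem]
  constructor
  · refine fun h => ⟨?_, ?_⟩
    · rintro n ⟨⟨x, hx, hxn⟩, ⟨y, hy, hyn⟩⟩
      exact (h x hx y hy).2 n hxn hyn
    · rintro _ ⟨⟨x, hx, rfl⟩, ⟨y, hy, hyx⟩⟩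
      exact (h x hx y hy).1 hyx.symm
  · rintro ⟨hcolors, hdom⟩ x hx y hy
    exact ⟨fun hxy => hdom x.1 ⟨⟨x, hx, rfl⟩, ⟨y, hy, hxy.symm⟩⟩,
      fun n hxn hyn => hcolors n ⟨⟨x, hx, hxn⟩, ⟨y, hy, hyn⟩⟩⟩

lemma exists_isSpread_of_essDiff {T : ℕ → Set (Set (ℕ × ℕ))}
    (hT : ∀ k : ℕ, IsMonoTower B 1 k (T k)) (hdiff : EssDiff B T) : ∃ S, IsSpread B S := by
  choose n S hvert hcard hTS using fun k => (hT k).1.exists_eq_image_singleton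
  refine ⟨S, hcard, fun k => ⟨n k, hvert k⟩, fun i j hij => ?_⟩
  exact separated_iff_tower_inter_eq_empty.2 (hTS i ▸ hTS j ▸ hdiff i j hij)

lemma IsSpread.exists_essDiff (hS : IsSpread B S) (hcover : ∀ x, ∃ n, x ∈ B n) :
    ∃ T : ℕ → Set (Set (ℕ × ℕ)), (∀ k : ℕ, IsMonoTower B 1 k (T k)) ∧ EssDiff B T := by
  refine ⟨fun k => singleton '' S k, fun k => ⟨?_, ?_⟩,
    fun i j hij => separated_iff_tower_inter_eq_empty.1 (hS.separated hij)⟩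
  · obtain ⟨n, hn⟩ := hS.exists_subset_vert k
    exact hS.encard_eq k ▸ isTower_image_singleton hn
  · rintro _ ⟨x, -, rfl⟩
    simpa only [singleton_subset_iff] using hcover x

end Towers

section Construction

variable {B : ℕ → Set (ℕ × ℕ)}

lemma exists_finset_separated_of_not_orth (hfin : ∀ x, {n | x ∈ B n}.Finite)
    (h : ¬ Orth EDI (FinPart B)) (t : Finset (ℕ × ℕ)) :
    ∃ s : Finset (ℕ × ℕ), (∃ n, ↑s ⊆ Vert n) ∧ t.card < s.card ∧ Separated B t s := by
  have hcolors : (⋃ x ∈ t, {n | x ∈ B n}).Finite := t.finite_toSet.biUnion fun x _ => hfin x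
  let U : Set (ℕ × ℕ) := ⋃ n ∈ hcolors.toFinset, B n
  have hlarge : {n | (t.card : ℕ∞) < (Uᶜ ∩ Vert n).encard}.Infinite := fun hsmall =>
    h ⟨Uᶜ, ⟨t.card, hsmall⟩, mem_finPart_of_subset (compl_compl U).subset⟩
  obtain ⟨n, hn, hnt⟩ := hlarge.exists_notMem_finite (t.finite_toSet.image Prod.fst)
  obtain ⟨s, hs, hcard⟩ := exists_subset_encard_eq (Order.add_one_le_of_lt hn)
  lift s to Finset (ℕ × ℕ) using finite_of_encard_eq_coe (k := t.card + 1) hcard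
  refine ⟨s, ⟨n, fun y hy => (hs hy).2⟩, ?_, fun x hx y hy => ⟨fun hxy => ?_, fun k hxk hyk => ?_⟩⟩
  · rw [encard_coe_eq_coe_finsetCard] at hcard
    exact Nat.lt_of_succ_le (by exact_mod_cast hcard.ge)
  · exact hnt ⟨x, hx, hxy.trans (hs hy).2⟩
  · exact (hs hy).1 (mem_biUnion (hcolors.mem_toFinset.2 (mem_biUnion hx hxk)) hyk)

lemma exists_isSpread_of_not_orth (hfin : ∀ x, {n | x ∈ B n}.Finite)
    (h : ¬ Orth EDI (FinPart B)) : ∃ S, IsSpread B S := by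
  classical
  obtain ⟨f, hvert, hf⟩ := exists_seq_of_forall_finset_exists
    (fun s : Finset (ℕ × ℕ) => ∃ n, ↑s ⊆ Vert n)
    (fun s t => s.card < t.card ∧ Separated B s t) fun u _ => by
      obtain ⟨s, hs, hcard, hsep⟩ := exists_finset_separated_of_not_orth hfin h (u.biUnion id)
      refine ⟨s, hs, fun t ht => ?_⟩
      have hsub : t ⊆ u.biUnion id := Finset.subset_biUnion_of_mem id ht
      exact ⟨(Finset.card_le_card hsub).trans_lt hcard, hsep.mono hsub subset_rfl⟩
  have hcard : StrictMono fun k => (f k).card := fun i j hij => (hf i j hij).1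
  have hsep : Pairwise (Function.onFun (Separated B) fun k => (f k : Set (ℕ × ℕ))) :=
    fun i j hij => hij.lt_or_gt.elim (fun hlt => (hf i j hlt).2) fun hgt => (hf j i hgt).2.symm
  choose S hS hScard using fun k => Finset.exists_subset_card_eq (hcard.le_apply (x := k))
  refine ⟨fun k => S k, fun k => ?_, fun k => ?_, fun i j hij => (hsep hij).mono (hS i) (hS j)⟩
  · rw [encard_coe_eq_coe_finsetCard, hScard]
  · exact (hvert k).imp fun n hn => Subset.trans (hS k) hn

end Construction

namespace IsSpread

variable {B S : ℕ → Set (ℕ × ℕ)}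

lemma finite (hS : IsSpread B S) (k : ℕ) : (S k).Finite :=
  finite_of_encard_eq_coe (hS.encard_eq k)

lemma nonempty (hS : IsSpread B S) {k : ℕ} (hk : k ≠ 0) : (S k).Nonempty := by
  rw [← encard_ne_zero, hS.encard_eq]
  exact_mod_cast hk

lemma eq_of_fst_eq (hS : IsSpread B S) {i j : ℕ} {x y : ℕ × ℕ} (hx : x ∈ S i) (hy : y ∈ S j)
    (hxy : x.1 = y.1) : i = j :=
  by_contra fun hij => (hS.separated hij x hx y hy).1 hxy

lemma finite_iUnion_inter (hS : IsSpread B S) (n : ℕ) : ((⋃ k, S k) ∩ B n).Finite := by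
  rcases ((⋃ k, S k) ∩ B n).eq_empty_or_nonempty with hempty | ⟨x, hx, hxn⟩
  · exact hempty ▸ finite_empty
  obtain ⟨i, hxi⟩ := mem_iUnion.1 hx
  refine (hS.finite i).subset ?_
  rintro y ⟨hy, hyn⟩
  obtain ⟨j, hyj⟩ := mem_iUnion.1 hy
  obtain rfl : i = j := by_contra fun hij => (hS.separated hij x hxi y hyj).2 n hxn hyn
  exact hyj

lemma finite_of_mem_finPart (hS : IsSpread B S) {X : Set (ℕ × ℕ)} (hXS : X ⊆ ⋃ k, S k)
    (hX : X ∈ FinPart B) : X.Finite := by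
  obtain ⟨F, hF⟩ := hX
  have hcolors : (⋃ n ∈ F, (⋃ k, S k) ∩ B n).Finite :=
    F.finite_toSet.biUnion fun n _ => hS.finite_iUnion_inter n
  refine (hF.union hcolors).subset fun x hx => ?_
  by_cases hxF : x ∈ ⋃ n ∈ F, B n
  · exact Or.inr (inter_iUnion₂ _ _ ▸ ⟨hXS hx, hxF⟩)
  · exact Or.inl ⟨hx, hxF⟩

lemma exists_mem_selI (hS : IsSpread B S) (m : ℕ) :
    ∃ X ∈ SelI, X ⊆ ⋃ k, S k ∧ ∀ k, m ≤ k → m ≤ (X ∩ S k).encard := by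
  have hmin : ∀ k, ((min m k : ℕ) : ℕ∞) ≤ (S k).encard := fun k => by
    rw [hS.encard_eq]
    exact_mod_cast min_le_right m k
  choose R hRS hRcard using fun k => exists_subset_encard_eq (hmin k)
  refine ⟨⋃ k, R k, ⟨m, fun n => ?_⟩, iUnion_mono hRS, fun k hk => ?_⟩
  · rcases ((⋃ k, R k) ∩ Vert n).eq_empty_or_nonempty with hempty | ⟨x, hx, rfl⟩
    · simp only [hempty, encard_empty, zero_le]
    obtain ⟨i, hxi⟩ := mem_iUnion.1 hx
    have hsub : (⋃ k, R k) ∩ Vert x.1 ⊆ R i := by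
      rintro y ⟨hy, hyx⟩
      obtain ⟨j, hyj⟩ := mem_iUnion.1 hy
      obtain rfl := hS.eq_of_fst_eq (hRS j hyj) (hRS i hxi) hyx
      exact hyj
    refine (encard_le_encard hsub).trans ?_
    rw [hRcard]
    exact_mod_cast min_le_left m i
  · rw [← min_eq_left hk, ← hRcard k]
    exact encard_le_encard (subset_inter (subset_iUnion R k) (hRS k))

lemma infinite_setOf_le_encard_inter_vert (hS : IsSpread B S) {m : ℕ}
    {X A : Set (ℕ × ℕ)} (hX : ∀ k, m ≤ k → m ≤ (X ∩ S k).encard) (hXA : (X \ A).Finite) :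
    {n | m ≤ (A ∩ Vert n).encard}.Infinite := by
  choose n hvert using hS.exists_subset_vert
  have hescape : (⋃ x ∈ X \ A, {k | x ∈ S k}).Finite :=
    hXA.biUnion fun x _ => Set.Subsingleton.finite fun i hi j hj => hS.eq_of_fst_eq hi hj rfl
  have hgood : (Ioi m \ ⋃ x ∈ X \ A, {k | x ∈ S k}).Infinite := (Ioi_infinite m).sdiff hescape
  have hinj : InjOn n (Ioi m) := by
    intro i hi j hj hij
    obtain ⟨x, hx⟩ := hS.nonempty (Nat.ne_zero_of_lt hi)
    obtain ⟨y, hy⟩ := hS.nonempty (Nat.ne_zero_of_lt hj)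
    exact hS.eq_of_fst_eq hx hy ((hvert i hx).trans (hij.trans (hvert j hy).symm))
  refine (hgood.image (hinj.mono sdiff_subset)).mono ?_
  rintro _ ⟨k, ⟨hk, hkA⟩, rfl⟩
  refine (hX k (le_of_lt hk)).trans (encard_le_encard ?_)
  rintro x ⟨hxX, hxS⟩
  exact ⟨by_contra fun hxA => hkA (mem_biUnion ⟨hxX, hxA⟩ hxS), hvert k hxS⟩

lemma not_isPJIdeal (hS : IsSpread B S) {I : Set (Set (ℕ × ℕ))} (hSel : SelI ⊆ I) (hED : I ⊆ EDI) :
    ¬ IsPJIdeal I (FinPart B) := by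
  intro hP
  choose X hXSel hXS hXcard using hS.exists_mem_selI
  obtain ⟨A, hA, hdiff⟩ := hP X fun m => hSel (hXSel m)
  obtain ⟨m, hm⟩ := hED hA
  have hfinite : (X (m + 1) \ A).Finite :=
    hS.finite_of_mem_finPart (sdiff_subset.trans (hXS _)) (hdiff _)
  refine hS.infinite_setOf_le_encard_inter_vert (hXcard _) hfinite ?_
  exact hm.subset fun n hn => (ENat.natCast_lt_natCast.2 m.lt_succ_self).trans_le hn

end IsSpread

lemma not_exists_essDiff_of_isPJIdeal {B : ℕ → Set (ℕ × ℕ)} {I : Set (Set (ℕ × ℕ))}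
    (hSel : SelI ⊆ I) (hED : I ⊆ EDI) (hP : IsPJIdeal I (FinPart B)) :
    ¬ ∃ T : ℕ → Set (Set (ℕ × ℕ)), (∀ k : ℕ, IsMonoTower B 1 k (T k)) ∧ EssDiff B T := by
  rintro ⟨T, hT, hdiff⟩
  obtain ⟨S, hS⟩ := exists_isSpread_of_essDiff hT hdiff
  exact hS.not_isPJIdeal hSel hED hP

lemma orth_of_not_exists_essDiff {B : ℕ → Set (ℕ × ℕ)} (hfin : ∀ x, {n | x ∈ B n}.Finite)
    (hcover : ∀ x, ∃ n, x ∈ B n)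
    (h : ¬ ∃ T : ℕ → Set (Set (ℕ × ℕ)), (∀ k : ℕ, IsMonoTower B 1 k (T k)) ∧ EssDiff B T) :
    Orth EDI (FinPart B) := by
  by_contra hO
  obtain ⟨S, hS⟩ := exists_isSpread_of_not_orth hfin hO
  exact h (hS.exists_essDiff hcover)

lemma IsPartition.finite_setOf_mem {B : ℕ → Set (ℕ × ℕ)} (hB : IsPartition B) (x : ℕ × ℕ) :
    {n | x ∈ B n}.Finite := by
  refine Set.Subsingleton.finite fun i hi j hj => by_contra fun hij => ?_
  exact (hB.2.1 i j hij).subset ⟨hi, hj⟩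

lemma IsPartition.exists_mem {B : ℕ → Set (ℕ × ℕ)} (hB : IsPartition B) (x : ℕ × ℕ) :
    ∃ n, x ∈ B n :=
  mem_iUnion.1 (hB.2.2 ▸ mem_univ x)

theorem stmt14_general (B : ℕ → Set (ℕ × ℕ)) (hfin : ∀ x, {n | x ∈ B n}.Finite)
    (hcover : ∀ x, ∃ n, x ∈ B n) :
    List.TFAE [
      IsPJIdeal SelI (FinPart B),
      IsPJIdeal EDI (FinPart B),
      Orth EDI (FinPart B),
      SubRestr EDI (FinPart B),
      SubRestr SelI (FinPart B),
      IsPJIdeal SelI (FinPart B) ∧ IsPJIdeal FinVert (FinPart B),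
      ∃ (Fv Fb : Finset ℕ) (Ff : Finset (ℕ → ℕ)),
        (Set.univ : Set (ℕ × ℕ)) ⊆
          (⋃ n ∈ Fv, Vert n) ∪ (⋃ n ∈ Fb, B n) ∪ ⋃ f ∈ Ff, totGraph f,
      ¬ ∃ T : ℕ → Set (Set (ℕ × ℕ)),
        (∀ k : ℕ, IsMonoTower B 1 (k : ℕ∞) (T k)) ∧ EssDiff B T
    ] := by
  tfae_have 3 → 4 := Orth.subRestr isLowerSet_finPart
  tfae_have 4 → 2 := SubRestr.isPJIdeal
  tfae_have 2 → 8 := not_exists_essDiff_of_isPJIdeal selI_subset_edI subset_rfl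
  tfae_have 8 → 3 := orth_of_not_exists_essDiff hfin hcover
  tfae_have 3 → 5 := subRestr_selI_finPart_of_orth
  tfae_have 5 → 1 := SubRestr.isPJIdeal
  tfae_have 1 → 8 := not_exists_essDiff_of_isPJIdeal subset_rfl selI_subset_edI
  tfae_have 3 → 6 := fun h =>
    ⟨(subRestr_selI_finPart_of_orth h).isPJIdeal, (subRestr_finVert_finPart_of_orth h).isPJIdeal⟩
  tfae_have 6 → 1 := And.left
  tfae_have 3 ↔ 7 := orth_edI_finPart_iff_exists_cover
  tfae_finish

theorem stmt14 (B : ℕ → Set (ℕ × ℕ)) (hB : IsPartition B) :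
    List.TFAE [
      IsPJIdeal SelI (FinPart B),
      IsPJIdeal EDI (FinPart B),
      Orth EDI (FinPart B),
      SubRestr EDI (FinPart B),
      SubRestr SelI (FinPart B),
      IsPJIdeal SelI (FinPart B) ∧ IsPJIdeal FinVert (FinPart B),
      ∃ (Fv Fb : Finset ℕ) (Ff : Finset (ℕ → ℕ)),
        (Set.univ : Set (ℕ × ℕ)) ⊆
          (⋃ n ∈ Fv, Vert n) ∪ (⋃ n ∈ Fb, B n) ∪ ⋃ f ∈ Ff, totGraph f,
      ¬ ∃ T : ℕ → Set (Set (ℕ × ℕ)),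
        (∀ k : ℕ, IsMonoTower B 1 (k : ℕ∞) (T k)) ∧ EssDiff B T
    ] :=
  stmt14_general B hB.finite_setOf_mem hB.exists_mem
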